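/- For the prism allied graph D_n^t with n ≥ 4, the mixed metric dimension equals n + 1. -/

import Mathlib

/-- Vertices of the prism allied graph `Dₙᵗ`. -/
inductive DtV (n : ℕ) : Type
  | p : Fin n → DtV n
  | q : Fin n → DtV n
  | r : Fin n → DtV n
  | s : Fin n → DtV n
  deriving DecidableEq


/-- Cyclic successor on `Fin n` (indices mod `n`). -/
def finSucc {n : ℕ} (i : Fin n) : Fin n :=
  ⟨(i.val + 1) % n, Nat.mod_lt _ (Nat.lt_of_le_of_lt (Nat.zero_le _) i.isLt)⟩

/-- Base relation for the edges of the prism allied graph. -/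
def DtRel (n : ℕ) : DtV n → DtV n → Prop := fun a b =>
  ∃ i : Fin n,
    (a = .p i ∧ b = .q i) ∨ (a = .p i ∧ b = .p (finSucc i)) ∨
    (a = .q i ∧ b = .q (finSucc i)) ∨ (a = .r i ∧ b = .q i) ∨
    (a = .r i ∧ b = .q (finSucc i)) ∨ (a = .r i ∧ b = .s i)

/-- The prism allied graph `Dₙᵗ`. -/
def Dt (n : ℕ) : SimpleGraph (DtV n) := SimpleGraph.fromRel (DtRel n)

/-- Vertices of the web graph `Wₙ`. -/
inductive WV (n : ℕ) : Type
  | p : Fin n → WV n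
  | q : Fin n → WV n
  | r : Fin n → WV n
  deriving DecidableEq

/-- Base relation for the edges of the web graph. -/
def WRel (n : ℕ) : WV n → WV n → Prop := fun a b =>
  ∃ i : Fin n,
    (a = .p i ∧ b = .q i) ∨ (a = .p i ∧ b = .p (finSucc i)) ∨
    (a = .q i ∧ b = .q (finSucc i)) ∨ (a = .q i ∧ b = .r i)

/-- The web graph `Wₙ`. -/
def W (n : ℕ) : SimpleGraph (WV n) := SimpleGraph.fromRel (WRel n)

/-- Distance from a vertex to an (unordered) edge: `d(x, uv) = min (d x u) (d x v)`. -/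
noncomputable def edgeDist {V : Type*} (G : SimpleGraph V) (w : V) (e : Sym2 V) : ℕ :=
  Sym2.lift ⟨fun u v => min (G.dist w u) (G.dist w v), fun u v => min_comm _ _⟩ e

/-- Distance from a vertex to a mixed element (a vertex or an edge). -/
noncomputable def mixedDist {V : Type*} (G : SimpleGraph V) (w : V) :
    V ⊕ G.edgeSet → ℕ :=
  Sum.elim (G.dist w) (fun e => edgeDist G w e.1)

/-- `M` is a mixed metric generator: every two distinct elements of `V(G) ∪ E(G)` are
distinguished by some vertex of `M`. -/
def IsMixedMetricGen {V : Type*} (G : SimpleGraph V) (M : Set V) : Prop :=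
  ∀ a b : V ⊕ G.edgeSet, a ≠ b → ∃ w ∈ M, mixedDist G w a ≠ mixedDist G w b

/-- `M` is a (vertex) resolving set. -/
def IsResolving {V : Type*} (G : SimpleGraph V) (M : Set V) : Prop :=
  ∀ a b : V, a ≠ b → ∃ w ∈ M, G.dist w a ≠ G.dist w b

/-- `M` is an edge resolving set. -/
def IsEdgeResolving {V : Type*} (G : SimpleGraph V) (M : Set V) : Prop :=
  ∀ a b : G.edgeSet, a ≠ b → ∃ w ∈ M, edgeDist G w a.1 ≠ edgeDist G w b.1

/-- The metric dimension of `G`. -/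
noncomputable def metricDim {V : Type*} (G : SimpleGraph V) : ℕ :=
  sInf {k | ∃ M : Set V, IsResolving G M ∧ M.ncard = k}

/-- The edge metric dimension of `G`. -/
noncomputable def edgeMetricDim {V : Type*} (G : SimpleGraph V) : ℕ :=
  sInf {k | ∃ M : Set V, IsEdgeResolving G M ∧ M.ncard = k}

/-- The mixed metric dimension of `G`. -/
noncomputable def mixedMetricDim {V : Type*} (G : SimpleGraph V) : ℕ :=
  sInf {k | ∃ M : Set V, IsMixedMetricGen G M ∧ M.ncard = k}

/-!
A leaf of a graph lies in every mixed metric generator, because only the leaf itself is closer to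
the leaf than to its neighbour. So a generator of `Dₙᵗ` contains all the `sᵢ`; as these do not
separate `qᵢ` from `pᵢqᵢ`, it has at least one more vertex. Conversely, all the `sᵢ` together with
a single `pⱼ` suffice. The `sⱼ` nearest to a given vertex or edge form an arc of at most three
consecutive vertices, and for `n ≥ 4` such an arc determines its first vertex and its length.
With the distance at which the arc is reached, this leaves only three confusions: `qᵢ` with
`pᵢqᵢ` and `sᵢ` with `rᵢsᵢ`, which `pⱼ` separates, and `rᵢ`, `rᵢqᵢ`, `rᵢqᵢ₊₁` among each other,
which `sᵢ₋₁` and `sᵢ₊₁` separate.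
-/

section IterateSegment

variable {α : Type*} {f : α → α} {x y : α} {k l : ℕ}

/-- The segment `x, f x, …, f^[k - 1] x` of the orbit of `x` under `f`. For a cyclic shift these
are the arcs of the cycle. -/
def iterateSegment (f : α → α) (x : α) (k : ℕ) : Set α := (f^[·] x) '' Set.Iio k

theorem mem_iterateSegment : y ∈ iterateSegment f x k ↔ ∃ a < k, f^[a] x = y := Iff.rfl

theorem iterateSegment_zero : iterateSegment f x 0 = ∅ := by simp [iterateSegment]

theorem iterateSegment_succ :
    iterateSegment f x (k + 1) = insert x (iterateSegment f (f x) k) := by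
  ext y
  simp only [mem_iterateSegment, Nat.exists_lt_succ_left, Function.iterate_zero_apply,
    Function.iterate_succ_apply, Set.mem_insert_iff, eq_comm]

theorem ncard_iterateSegment (hk : k < f.minimalPeriod x) : (iterateSegment f x k).ncard = k := by
  have hinj : Set.InjOn (f^[·] x) (Set.Iio k) :=
    Function.iterate_injOn_Iio_minimalPeriod.mono (Set.Iio_subset_Iio hk.le)
  rw [iterateSegment, hinj.ncard_image, Set.ncard_eq_toFinset_card', Set.toFinset_Iio,
    Nat.card_Iio]

/-- The first point of a proper segment is its only point whose preimage lies outside. -/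
theorem eq_of_iterateSegment_eq (hk₀ : k ≠ 0) (hk : k < f.minimalPeriod x)
    (h : iterateSegment f x k = iterateSegment f y l) : x = y := by
  have hx : x ∈ iterateSegment f y l := h ▸ ⟨0, Nat.pos_of_ne_zero hk₀, rfl⟩
  obtain ⟨_ | a, ha, hax⟩ := mem_iterateSegment.1 hx
  · exact hax.symm
  · have hpred : f^[a] y ∈ iterateSegment f x k := h ▸ ⟨a, (Nat.lt_succ_self a).trans ha, rfl⟩
    obtain ⟨c, hc, hcx⟩ := mem_iterateSegment.1 hpred
    have hper : f.IsPeriodicPt (c + 1) x := by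
      rw [Function.IsPeriodicPt, Function.IsFixedPt, Function.iterate_succ_apply', hcx,
        ← Function.iterate_succ_apply' f, hax]
    exact absurd hper
      (Function.not_isPeriodicPt_of_pos_of_lt_minimalPeriod c.succ_ne_zero (hk.trans_le' hc))

theorem iterateSegment_inj (hk₀ : k ≠ 0) (hk : k < f.minimalPeriod x)
    (hl : l < f.minimalPeriod y) (h : iterateSegment f x k = iterateSegment f y l) :
    x = y ∧ k = l :=
  ⟨eq_of_iterateSegment_eq hk₀ hk h,
    by rw [← ncard_iterateSegment hk, h, ncard_iterateSegment hl]⟩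

end IterateSegment

section MixedMetric

variable {V : Type*} {G : SimpleGraph V} {u v w : V}

/-- `φ` folds `G` along `S` if it collapses every edge between `S` and its complement, and collapses
every other edge or maps it to an edge. -/
def IsFold (G : SimpleGraph V) (S : Set V) (φ : V → V) : Prop :=
  ∀ x y, G.Adj x y → φ x = φ y ∨ (x ∈ S ↔ y ∈ S) ∧ G.Adj (φ x) (φ y)

/-- A walk from outside `S` into `S` has a collapsed edge, so folding it makes it shorter. -/
theorem IsFold.dist_add_one_le {S : Set V} {φ : V → V} (hφ : IsFold G S φ) (hwφ : φ w = w)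
    (hw : w ∉ S) (hv : v ∈ S) (hwv : G.Reachable w v) :
    G.dist w (φ v) + 1 ≤ G.dist w v := by
  classical
  let depth (x : V) : ℕ := G.dist w (φ x) + if x ∈ S then 1 else 0
  have hstep : ∀ x y, G.Adj x y → depth x ≤ depth y + 1 := by
    intro x y hxy
    obtain heq | ⟨hS, hadj⟩ := hφ x y hxy
    · grind
    · have := hadj.diff_dist_adj (u := w)
      grind
  have hwalk : ∀ {x y} (P : G.Walk x y), depth y ≤ depth x + P.length := by
    intro x y P
    induction P with
    | nil => simp
    | cons hxy P ih =>
      have := hstep _ _ hxy.symm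
      simp only [SimpleGraph.Walk.length_cons]
      lia
  obtain ⟨P, hP⟩ := hwv.exists_walk_length_eq_dist
  simpa [depth, hwφ, hw, hv, hP] using hwalk P

theorem IsFold.dist_eq_add_one {S : Set V} {φ : V → V} (hφ : IsFold G S φ) (hwφ : φ w = w)
    (hw : w ∉ S) (hv : v ∈ S) (hφv : G.Adj (φ v) v) (hwv : G.Reachable w v) :
    G.dist w v = G.dist w (φ v) + 1 := by
  have hle := hφ.dist_add_one_le hwφ hw hv hwv
  have hadj := hφv.diff_dist_adj (u := w)
  lia

theorem isFold_update_leaf [DecidableEq V] (huv : G.Adj u v) (hleaf : ∀ x, G.Adj x v → x = u) :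
    IsFold G {v} (Function.update id v u) := by
  intro x y hxy
  by_cases hx : x = v <;> by_cases hy : y = v
  · simp [hx, hy]
  · subst hx
    simp [hleaf y hxy.symm, huv.ne]
  · subst hy
    simp [hleaf x hxy, huv.ne]
  · simp [hx, hy, hxy]

theorem dist_leaf (huv : G.Adj u v) (hleaf : ∀ x, G.Adj x v → x = u) (hwv : w ≠ v)
    (hr : G.Reachable w v) : G.dist w v = G.dist w u + 1 := by
  classical
  simpa using
    (isFold_update_leaf huv hleaf).dist_eq_add_one (by simp [hwv]) hwv rfl (by simpa) hr

theorem edgeDist_diag : edgeDist G w (Sym2.diag v) = G.dist w v := min_self _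

theorem edgeDist_mk : edgeDist G w s(u, v) = min (G.dist w u) (G.dist w v) := rfl

/-- The endpoints of a vertex or an edge, a vertex being regarded as a degenerate edge so that
`edgeDist` computes `mixedDist` in both cases. -/
def mixedEnds : V ⊕ G.edgeSet → Sym2 V := Sum.elim Sym2.diag Subtype.val

theorem mixedDist_eq_edgeDist (a : V ⊕ G.edgeSet) :
    mixedDist G w a = edgeDist G w (mixedEnds a) := by
  cases a with
  | inl v => exact edgeDist_diag.symm
  | inr e => rfl

theorem mixedEnds_injective : Function.Injective (mixedEnds (G := G)) :=
  Sym2.diag_injective.sumElim Subtype.val_injective fun v e h =>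
    G.not_isDiag_of_mem_edgeSet e.2 (h ▸ Sym2.diag_isDiag v)

theorem IsMixedMetricGen.exists_dist_lt {M : Set V} (hM : IsMixedMetricGen G M)
    (h : G.Adj u v) : ∃ w ∈ M, G.dist w u < G.dist w v := by
  obtain ⟨w, hw, hne⟩ := hM (.inl v) (.inr ⟨s(u, v), h⟩) Sum.inl_ne_inr
  refine ⟨w, hw, ?_⟩
  change G.dist w v ≠ min (G.dist w u) (G.dist w v) at hne
  lia

theorem IsMixedMetricGen.leaf_mem {M : Set V} (hM : IsMixedMetricGen G M)
    (hG : G.Preconnected) (huv : G.Adj u v) (hleaf : ∀ x, G.Adj x v → x = u) : v ∈ M := by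
  obtain ⟨w, hw, hlt⟩ := hM.exists_dist_lt huv.symm
  by_contra hv
  have := dist_leaf huv hleaf (ne_of_mem_of_not_mem hw hv) (hG w v)
  lia

end MixedMetric

namespace Dt

open DtV

variable {n : ℕ}

theorem finSucc_bijective : Function.Bijective (finSucc : Fin n → Fin n) := by
  have : (finSucc : Fin n → Fin n) = finRotate n := by
    cases n with
    | zero => exact Subsingleton.elim _ _
    | succ m => ext i; simp [finSucc, Fin.val_add]
  exact this ▸ (finRotate n).bijective

theorem finSucc_inj {i j : Fin n} : finSucc i = finSucc j ↔ i = j :=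
  finSucc_bijective.injective.eq_iff

theorem val_iterate_finSucc (i : Fin n) (k : ℕ) : (finSucc^[k] i).val = (i + k) % n := by
  induction k with
  | zero => simp [Nat.mod_eq_of_lt]
  | succ k ih => simp [Function.iterate_succ_apply', finSucc, ih, add_assoc]

theorem exists_iterate_finSucc_eq (i j : Fin n) : ∃ k, finSucc^[k] i = j := by
  refine ⟨n - i + j, Fin.ext ?_⟩
  rw [val_iterate_finSucc, ← add_assoc, Nat.add_sub_cancel' i.2.le, Nat.add_mod_left,
    Nat.mod_eq_of_lt j.2]

theorem isPeriodicPt_finSucc_iff {i : Fin n} {k : ℕ} :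
    Function.IsPeriodicPt finSucc k i ↔ n ∣ k := by
  rw [Function.IsPeriodicPt, Function.IsFixedPt, Fin.ext_iff, val_iterate_finSucc,
    ← Nat.add_modEq_left_iff (a := i), Nat.ModEq, Nat.mod_eq_of_lt i.2]

theorem minimalPeriod_finSucc (i : Fin n) : Function.minimalPeriod finSucc i = n :=
  Nat.dvd_antisymm
    (Function.isPeriodicPt_iff_minimalPeriod_dvd.1 (isPeriodicPt_finSucc_iff.2 dvd_rfl))
    (isPeriodicPt_finSucc_iff.1 (Function.isPeriodicPt_minimalPeriod _ _))

theorem finSucc_ne_self (hn : 2 ≤ n) (i : Fin n) : finSucc i ≠ i := fun h =>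
  absurd (isPeriodicPt_finSucc_iff (k := 1).1 h) (Nat.not_dvd_of_pos_of_lt one_pos hn)

theorem finSucc_finSucc_ne_self (hn : 3 ≤ n) (i : Fin n) : finSucc (finSucc i) ≠ i := fun h =>
  absurd (isPeriodicPt_finSucc_iff (k := 2).1 h) (Nat.not_dvd_of_pos_of_lt two_pos hn)

theorem adj_iff {u v : DtV n} : (Dt n).Adj u v ↔ u ≠ v ∧ (DtRel n u v ∨ DtRel n v u) :=
  SimpleGraph.fromRel_adj _ _ _

theorem adj_p_q (i : Fin n) : (Dt n).Adj (p i) (q i) := by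
  simp [adj_iff, DtRel]

theorem adj_p_finSucc {i : Fin n} (h : i ≠ finSucc i) : (Dt n).Adj (p i) (p (finSucc i)) := by
  simp [adj_iff, DtRel, h]

theorem adj_r_q_iff {i j : Fin n} : (Dt n).Adj (r j) (q i) ↔ i = j ∨ i = finSucc j := by
  simp only [adj_iff, DtRel]
  grind

theorem not_adj_r_r (i j : Fin n) : ¬ (Dt n).Adj (r i) (r j) := by
  simp [adj_iff, DtRel]

theorem adj_s_iff {v : DtV n} {i : Fin n} : (Dt n).Adj v (s i) ↔ v = r i := by
  simp only [adj_iff, DtRel]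
  grind

theorem reachable_p_p (i j : Fin n) : (Dt n).Reachable (p i) (p j) := by
  obtain ⟨k, rfl⟩ := exists_iterate_finSucc_eq i j
  induction k with
  | zero => rfl
  | succ k ih =>
    rw [Function.iterate_succ_apply']
    refine ih.trans ?_
    by_cases h : finSucc^[k] i = finSucc (finSucc^[k] i)
    · rw [← h]
    · exact (adj_p_finSucc h).reachable

theorem preconnected : (Dt n).Preconnected := by
  have hp : ∀ v : DtV n, ∃ i, (Dt n).Reachable v (p i)
    | p i => ⟨i, .rfl⟩
    | q i => ⟨i, (adj_p_q i).symm.reachable⟩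
    | r i => ⟨i, (adj_r_q_iff.2 (.inl rfl)).reachable.trans (adj_p_q i).symm.reachable⟩
    | s i => ⟨i, (adj_s_iff.2 rfl).symm.reachable.trans <|
        (adj_r_q_iff.2 (.inl rfl)).reachable.trans (adj_p_q i).symm.reachable⟩
  intro u v
  obtain ⟨i, hu⟩ := hp u
  obtain ⟨j, hv⟩ := hp v
  exact hu.trans ((reachable_p_p i j).trans hv.symm)

theorem dist_s {w : DtV n} {i : Fin n} (hw : w ≠ s i) :
    (Dt n).dist w (s i) = (Dt n).dist w (r i) + 1 :=
  dist_leaf (adj_s_iff.2 rfl) (fun _ => adj_s_iff.1) hw (preconnected _ _)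

/-- The projection of the inner cycle `pᵢ` onto the middle cycle `qᵢ`. -/
def foldOut : DtV n → DtV n
  | p i => q i
  | v => v

/-- The projection of the whole graph onto the inner cycle `pᵢ`. -/
def foldIn : DtV n → DtV n
  | p i | q i | r i | s i => p i

theorem isFold_foldOut : IsFold (Dt n) (Set.range p) foldOut := by
  intro x y hxy
  obtain ⟨-, ⟨i, h⟩ | ⟨i, h⟩⟩ := adj_iff.1 hxy <;>
    obtain ⟨rfl, rfl⟩ | ⟨rfl, rfl⟩ | ⟨rfl, rfl⟩ | ⟨rfl, rfl⟩ | ⟨rfl, rfl⟩ | ⟨rfl, rfl⟩ := h <;>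
    simp_all [foldOut, adj_iff, DtRel]

theorem isFold_foldIn : IsFold (Dt n) (Set.range p)ᶜ foldIn := by
  intro x y hxy
  obtain ⟨-, ⟨i, h⟩ | ⟨i, h⟩⟩ := adj_iff.1 hxy <;>
    obtain ⟨rfl, rfl⟩ | ⟨rfl, rfl⟩ | ⟨rfl, rfl⟩ | ⟨rfl, rfl⟩ | ⟨rfl, rfl⟩ | ⟨rfl, rfl⟩ := h <;>
    simp_all [foldIn, adj_iff, DtRel, em]

theorem dist_p_q (j i : Fin n) :
    (Dt n).dist (p j) (q i) = (Dt n).dist (p j) (p i) + 1 :=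
  isFold_foldIn.dist_eq_add_one rfl (by simp) (by simp) (adj_p_q i) (preconnected _ _)

theorem dist_s_p (j i : Fin n) : (Dt n).dist (s j) (p i) = (Dt n).dist (s j) (q i) + 1 :=
  isFold_foldOut.dist_eq_add_one rfl (by simp) ⟨i, rfl⟩ (adj_p_q i).symm (preconnected _ _)

theorem dist_s_q (j i : Fin n) : (Dt n).dist (s j) (q i) = (Dt n).dist (r j) (q i) + 1 := by
  rw [SimpleGraph.dist_comm, dist_s (by simp), SimpleGraph.dist_comm]

theorem two_le_dist_s_q (j i : Fin n) : 2 ≤ (Dt n).dist (s j) (q i) := by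
  have := (preconnected (r j) (q i)).pos_dist_of_ne (by simp)
  rw [dist_s_q]
  lia

theorem dist_s_q_eq_two_iff {j i : Fin n} :
    (Dt n).dist (s j) (q i) = 2 ↔ i = j ∨ i = finSucc j := by
  rw [dist_s_q, ← adj_r_q_iff, ← SimpleGraph.dist_eq_one_iff_adj, Nat.add_left_inj (n := 1)]

theorem dist_s_r_self (i : Fin n) : (Dt n).dist (s i) (r i) = 1 :=
  SimpleGraph.dist_eq_one_iff_adj.2 (adj_s_iff.2 rfl).symm

theorem three_le_dist_s_r {j i : Fin n} (h : i ≠ j) : 3 ≤ (Dt n).dist (s j) (r i) := by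
  have := (preconnected (r i) (r j)).one_lt_dist_of_ne_of_not_adj (by simpa) (not_adj_r_r i j)
  rw [SimpleGraph.dist_comm, dist_s (by simp)]
  lia

/-- The ten orbits of the vertices and edges of `Dₙᵗ` under rotation; `rq` consists of the edges
`rᵢqᵢ`, and `rq'` of the edges `rᵢqᵢ₊₁`. -/
inductive Orbit : Type
  | p | q | r | s | pq | pp | qq | rq | rq' | rs

namespace Orbit

/-- The members of an orbit, as pairs of endpoints in the sense of `mixedEnds`. They are numbered so
that the `sⱼ` nearest to the `i`-th member are `sᵢ, sᵢ₊₁, …`, whence the shift of `pᵢ` and `qᵢ`. -/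
def ends : Orbit → Fin n → Sym2 (DtV n)
  | p, i => Sym2.diag (.p (finSucc i))
  | q, i => Sym2.diag (.q (finSucc i))
  | r, i => Sym2.diag (.r i)
  | s, i => Sym2.diag (.s i)
  | pq, i => s(.p (finSucc i), .q (finSucc i))
  | pp, i => s(.p (finSucc i), .p (finSucc (finSucc i)))
  | qq, i => s(.q (finSucc i), .q (finSucc (finSucc i)))
  | rq, i => s(.r i, .q i)
  | rq', i => s(.r i, .q (finSucc i))
  | rs, i => s(.r i, .s i)

/-- The distance from the members of an orbit to the nearest `sⱼ`. -/
def height : Orbit → ℕ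
  | p | pp => 3
  | q | pq | qq => 2
  | r | rq | rq' => 1
  | s | rs => 0

/-- The number of `sⱼ` nearest to a member of an orbit. -/
def width : Orbit → ℕ
  | pp | qq => 3
  | p | q | pq => 2
  | r | rq | rq' | s | rs => 1

end Orbit

theorem exists_ends_eq (a : DtV n ⊕ (Dt n).edgeSet) :
    ∃ (o : Orbit) (i : Fin n), o.ends i = mixedEnds a := by
  have hsurj := (finSucc_bijective (n := n)).surjective
  rcases a with (i | i | i | i) | ⟨⟨u, v⟩, h⟩
  · obtain ⟨i, rfl⟩ := hsurj i
    exact ⟨.p, i, rfl⟩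
  · obtain ⟨i, rfl⟩ := hsurj i
    exact ⟨.q, i, rfl⟩
  · exact ⟨.r, i, rfl⟩
  · exact ⟨.s, i, rfl⟩
  · change ∃ (o : Orbit) (i : Fin n), o.ends i = s(u, v)
    suffices hrel : ∀ {u v}, DtRel n u v → ∃ (o : Orbit) (i : Fin n), o.ends i = s(u, v) by
      obtain h | h := (adj_iff.1 h).2
      · exact hrel h
      · exact Sym2.eq_swap (a := u) ▸ hrel h
    rintro u v ⟨i, h⟩
    obtain ⟨j, rfl⟩ := hsurj i
    obtain ⟨rfl, rfl⟩ | ⟨rfl, rfl⟩ | ⟨rfl, rfl⟩ | ⟨rfl, rfl⟩ | ⟨rfl, rfl⟩ | ⟨rfl, rfl⟩ := h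
    exacts [⟨.pq, j, rfl⟩, ⟨.pp, j, rfl⟩, ⟨.qq, j, rfl⟩, ⟨.rq, _, rfl⟩, ⟨.rq', _, rfl⟩,
      ⟨.rs, _, rfl⟩]

theorem height_le_edgeDist (o : Orbit) (i j : Fin n) :
    o.height ≤ edgeDist (Dt n) (s j) (o.ends i) := by
  have hq := two_le_dist_s_q j
  have hr : 1 ≤ (Dt n).dist (s j) (r i) := (preconnected (s j) (r i)).pos_dist_of_ne (by simp)
  cases o <;> simp only [Orbit.height, Orbit.ends, edgeDist_diag, edgeDist_mk, dist_s_p] <;> grind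

theorem edgeDist_eq_height_iff (o : Orbit) (i j : Fin n) :
    edgeDist (Dt n) (s j) (o.ends i) = o.height ↔ j ∈ iterateSegment finSucc i o.width := by
  have hq := two_le_dist_s_q j
  have hq₂ : ∀ k, (Dt n).dist (s j) (q k) = 2 ↔ k = j ∨ k = finSucc j := fun _ =>
    dist_s_q_eq_two_iff
  have hr := dist_s_r_self i
  have hr₃ := three_le_dist_s_r (j := j) (i := i)
  have hs : (Dt n).dist (s j) (s i) = 0 ↔ s j = s i := (preconnected _ _).dist_eq_zero_iff
  cases o <;>
    simp only [Orbit.height, Orbit.width, Orbit.ends, edgeDist_diag, edgeDist_mk, dist_s_p,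
      iterateSegment_succ, iterateSegment_zero, Set.mem_insert_iff, Set.mem_empty_iff_false] <;>
    grind [finSucc_inj]

theorem height_width_index_eq_of_edgeDist_s_eq (hn : 4 ≤ n) {o o' : Orbit} {i i' : Fin n}
    (h : ∀ j, edgeDist (Dt n) (s j) (o.ends i) = edgeDist (Dt n) (s j) (o'.ends i')) :
    o.height = o'.height ∧ o.width = o'.width ∧ i = i' := by
  have hwidth : ∀ o : Orbit, o.width ≠ 0 ∧ o.width < n := by
    rintro (_ | _) <;> simp only [Orbit.width] <;> lia
  have hstart : ∀ (o : Orbit) (i : Fin n), edgeDist (Dt n) (s i) (o.ends i) = o.height :=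
    fun o i => (edgeDist_eq_height_iff o i i).2 ⟨0, Nat.pos_of_ne_zero (hwidth o).1, rfl⟩
  have hheight : o.height = o'.height :=
    le_antisymm (hstart o' i' ▸ h i' ▸ height_le_edgeDist o i i')
      (hstart o i ▸ h i ▸ height_le_edgeDist o' i' i)
  have harc : iterateSegment finSucc i o.width = iterateSegment finSucc i' o'.width := by
    ext j
    rw [← edgeDist_eq_height_iff, ← edgeDist_eq_height_iff, h, hheight]
  obtain ⟨hi, hw⟩ := iterateSegment_inj (hwidth o).1
    ((hwidth o).2.trans_eq (minimalPeriod_finSucc i).symm)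
    ((hwidth o').2.trans_eq (minimalPeriod_finSucc i').symm) harc
  exact ⟨hheight, hw, hi⟩

theorem edgeDist_s_r_q_eq_two_iff {i j k : Fin n} (h : i ≠ j) :
    edgeDist (Dt n) (s j) s(r i, q k) = 2 ↔ k = j ∨ k = finSucc j := by
  have := three_le_dist_s_r h
  rw [edgeDist_mk, ← dist_s_q_eq_two_iff]
  lia

theorem orbit_eq_of_edgeDist_eq (hn : 3 ≤ n) {o o' : Orbit} {i j₀ : Fin n}
    (hheight : o.height = o'.height) (hwidth : o.width = o'.width)
    (hs : ∀ j, edgeDist (Dt n) (s j) (o.ends i) = edgeDist (Dt n) (s j) (o'.ends i))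
    (hp : edgeDist (Dt n) (p j₀) (o.ends i) = edgeDist (Dt n) (p j₀) (o'.ends i)) : o = o' := by
  obtain ⟨k, hk⟩ := finSucc_bijective.surjective i
  have hne : ∀ i : Fin n, finSucc i ≠ i := finSucc_ne_self (by lia)
  have hik : i ≠ k := hk ▸ hne k
  have hiσ : i ≠ finSucc i := (hne i).symm
  have hσk : finSucc i ≠ k := hk ▸ finSucc_finSucc_ne_self hn k
  have h_pq : edgeDist (Dt n) (p j₀) s(p (finSucc i), q (finSucc i)) ≠
      (Dt n).dist (p j₀) (q (finSucc i)) := by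
    rw [edgeDist_mk, dist_p_q]
    lia
  have h_rs : edgeDist (Dt n) (p j₀) s(r i, s i) ≠ (Dt n).dist (p j₀) (s i) := by
    rw [edgeDist_mk, dist_s (by simp)]
    lia
  have hk_rq : edgeDist (Dt n) (s k) s(r i, q i) = 2 :=
    (edgeDist_s_r_q_eq_two_iff hik).2 (.inr hk.symm)
  have hk_rq' : edgeDist (Dt n) (s k) s(r i, q (finSucc i)) ≠ 2 := by
    simp [edgeDist_s_r_q_eq_two_iff hik, hσk, hk, hne]
  have hσ_rq' : edgeDist (Dt n) (s (finSucc i)) s(r i, q (finSucc i)) = 2 :=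
    (edgeDist_s_r_q_eq_two_iff hiσ).2 (.inl rfl)
  have hk_r := three_le_dist_s_r hik
  have hσ_r := three_le_dist_s_r hiσ
  have hsk := hs k
  have hsσ := hs (finSucc i)
  cases o <;> cases o' <;>
    simp only [Orbit.height, Orbit.width, Orbit.ends, edgeDist_diag] at * <;> lia

theorem isMixedMetricGen_insert_p (hn : 4 ≤ n) (j₀ : Fin n) :
    IsMixedMetricGen (Dt n) (insert (p j₀) (Set.range s)) := by
  intro a b hab
  by_contra! heq
  simp only [Set.forall_mem_insert, Set.forall_mem_range, mixedDist_eq_edgeDist] at heq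
  obtain ⟨o, i, ha⟩ := exists_ends_eq a
  obtain ⟨o', i', hb⟩ := exists_ends_eq b
  rw [← ha, ← hb] at heq
  obtain ⟨hp, hs⟩ := heq
  obtain ⟨hheight, hwidth, rfl⟩ := height_width_index_eq_of_edgeDist_s_eq hn hs
  obtain rfl := orbit_eq_of_edgeDist_eq (by lia) hheight hwidth hs hp
  exact hab (mixedEnds_injective (ha.symm.trans hb))

instance : Finite (DtV n) := by
  have hcover : Set.range p ∪ Set.range q ∪ Set.range r ∪ Set.range s = @Set.univ (DtV n) :=
    Set.eq_univ_of_forall fun v => by cases v <;> simp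
  exact Set.finite_univ_iff.1 (hcover ▸ Set.toFinite _)

theorem ncard_insert_range_s {w : DtV n} (hw : w ∉ Set.range s) :
    (insert w (Set.range s)).ncard = n + 1 := by
  rw [Set.ncard_insert_of_notMem hw, Set.ncard_range_of_injective fun _ _ => s.inj, Nat.card_fin]

theorem range_s_subset {M : Set (DtV n)} (hM : IsMixedMetricGen (Dt n) M) : Set.range s ⊆ M :=
  Set.range_subset_iff.2 fun _ => hM.leaf_mem preconnected (adj_s_iff.2 rfl) fun _ => adj_s_iff.1

theorem add_one_le_ncard_of_isMixedMetricGen [NeZero n] {M : Set (DtV n)}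
    (hM : IsMixedMetricGen (Dt n) M) : n + 1 ≤ M.ncard := by
  obtain ⟨w, hwM, hlt⟩ := hM.exists_dist_lt (adj_p_q 0)
  have hws : w ∉ Set.range s := by
    rintro ⟨j, rfl⟩
    rw [dist_s_p] at hlt
    lia
  rw [← ncard_insert_range_s hws]
  exact Set.ncard_le_ncard (Set.insert_subset hwM (range_s_subset hM))

end Dt

theorem stmt4 (n : ℕ) (hn : 4 ≤ n) : mixedMetricDim (Dt n) = n + 1 := by
  have : NeZero n := ⟨by lia⟩
  have hleast : IsLeast {k | ∃ M : Set (DtV n), IsMixedMetricGen (Dt n) M ∧ M.ncard = k} (n + 1) :=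
    ⟨⟨_, Dt.isMixedMetricGen_insert_p hn 0, Dt.ncard_insert_range_s (by simp)⟩, by
      rintro _ ⟨M, hM, rfl⟩
      exact Dt.add_one_le_ncard_of_isMixedMetricGen hM⟩
  exact hleast.csInf_eq
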